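/- Let Z > 0 and c > 0 be real constants. The function B ↦ Z / (B · ln(1 + c/B)) is convex on (0, ∞); that is, for all B₁, B₂ ∈ (0, ∞) and all t ∈ [0,1], Z/((t·B₁ + (1−t)·B₂)·ln(1 + c/(t·B₁ + (1−t)·B₂))) ≤ t·Z/(B₁·ln(1 + c/B₁)) + (1−t)·Z/(B₂·ln(1 + c/B₂)). -/

import Mathlib

open Real

/-!
The rate `B ↦ B * log (1 + c / B)` is the perspective of the concave function `x ↦ log (1 + c * x)`,
hence concave on `(0, ∞)`; it is also positive there. Since `x ↦ Z / x` is antitone and convex on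
the positive reals, composing it with the rate gives a convex function.
-/

/-- Concavity of `B ↦ B * log (1 + c / B)`: concavity of `log` at the points `1 + c / B₁` and
`1 + c / B₂`, with weights `t * B₁ / B` and `s * B₂ / B`, where `B = t * B₁ + s * B₂`. -/
lemma rate_concave {c B₁ B₂ t s : ℝ} (hc : 0 < c) (h₁ : 0 < B₁) (h₂ : 0 < B₂)
    (ht : 0 ≤ t) (hs : 0 ≤ s) (hts : t + s = 1) :
    t * (B₁ * log (1 + c / B₁)) + s * (B₂ * log (1 + c / B₂))
      ≤ (t * B₁ + s * B₂) * log (1 + c / (t * B₁ + s * B₂)) := by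
  have hB : 0 < t * B₁ + s * B₂ := by
    have := (convex_Ioi (0 : ℝ)) h₁ h₂ ht hs hts
    simpa using this
  set B := t * B₁ + s * B₂ with hBdef
  have key := strictConcaveOn_log_Ioi.concaveOn.2
    (show 1 + c / B₁ ∈ Set.Ioi (0 : ℝ) from Set.mem_Ioi.2 (by positivity))
    (show 1 + c / B₂ ∈ Set.Ioi (0 : ℝ) from Set.mem_Ioi.2 (by positivity))
    (show 0 ≤ t * B₁ / B by positivity) (show 0 ≤ s * B₂ / B by positivity)
    (by rw [← add_div, ← hBdef, div_self hB.ne'])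
  simp only [smul_eq_mul] at key
  have harg : t * B₁ / B * (1 + c / B₁) + s * B₂ / B * (1 + c / B₂) = 1 + c / B := by
    field_simp
    linear_combination c * hts - hBdef
  rw [harg] at key
  calc t * (B₁ * log (1 + c / B₁)) + s * (B₂ * log (1 + c / B₂))
      = B * (t * B₁ / B * log (1 + c / B₁) + s * B₂ / B * log (1 + c / B₂)) := by
        field_simp
    _ ≤ B * log (1 + c / B) := mul_le_mul_of_nonneg_left key hB.le

/-- Convexity of `x ↦ Z / x` on the positive reals. -/
lemma const_div_convex {Z a b t s : ℝ} (hZ : 0 < Z) (ha : 0 < a) (hb : 0 < b)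
    (ht : 0 ≤ t) (hs : 0 ≤ s) (hts : t + s = 1) (hab : 0 < t * a + s * b) :
    Z / (t * a + s * b) ≤ t * (Z / a) + s * (Z / b) := by
  have h : t * (Z / a) + s * (Z / b) = Z * (t * b + s * a) / (a * b) := by
    field_simp
  rw [h, div_le_div_iff₀ hab (by positivity), mul_assoc]
  refine mul_le_mul_of_nonneg_left ?_ hZ.le
  obtain rfl : s = 1 - t := by linarith
  -- The difference of the two sides is `t * (1 - t) * (a - b) ^ 2`.
  nlinarith [mul_nonneg (mul_nonneg ht hs) (sq_nonneg (a - b))]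

/-- The transmission latency B ↦ Z / (B · ln(1 + c/B)) is convex on (0, ∞). -/
theorem stmt_6 (Z c : ℝ) (hZ : 0 < Z) (hc : 0 < c) :
    ∀ B₁ B₂ : ℝ, B₁ ∈ Set.Ioi (0 : ℝ) → B₂ ∈ Set.Ioi (0 : ℝ) →
      ∀ t : ℝ, t ∈ Set.Icc (0 : ℝ) 1 →
        Z / ((t * B₁ + (1 - t) * B₂) * Real.log (1 + c / (t * B₁ + (1 - t) * B₂)))
          ≤ t * (Z / (B₁ * Real.log (1 + c / B₁)))
            + (1 - t) * (Z / (B₂ * Real.log (1 + c / B₂))) := by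
  intro B₁ B₂ h₁ h₂ t ⟨ht, ht1⟩
  have hs : 0 ≤ 1 - t := by linarith
  have hts : t + (1 - t) = 1 := by ring
  have rate_pos : ∀ B : ℝ, 0 < B → 0 < B * log (1 + c / B) := fun B hB =>
    mul_pos hB (log_pos (by linarith [div_pos hc hB]))
  have p₁ := rate_pos B₁ h₁
  have p₂ := rate_pos B₂ h₂
  have hpos : 0 < t * (B₁ * log (1 + c / B₁)) + (1 - t) * (B₂ * log (1 + c / B₂)) := by
    simpa using (convex_Ioi (0 : ℝ)) p₁ p₂ ht hs hts
  exact (div_le_div_of_nonneg_left hZ.le hpos (rate_concave hc h₁ h₂ ht hs hts)).trans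
    (const_div_convex hZ p₁ p₂ ht hs hts hpos)
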